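/- arXiv:math/0502003 — 2 statements merged into one kernel-verified Lean document; each statement's English description precedes it below -/
import Mathlib

section
/- (Compatibility of the deformed connection.) Let η : V →ₗ[ℝ] V be a fixed self-adjoint invertible operator, regarded as the constant metric x ↦ η, and suppose the connection D on U is η-compatible. Let h : U → V →ₗ[ℝ] V be a smooth map with each h x invertible, and define the metric g by g x := (h x)† ∘ η ∘ (h x), where † is the adjoint with respect to the inner product of V. Then the h-deformation D' of D is g-compatible. -/
open scoped RealInnerProductSpace

variable {V : Type*} [NormedAddCommGroup V] [InnerProductSpace ℝ V] [FiniteDimensional ℝ V]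

/-- A vector field on `U` is a smooth map `U → V`. -/
def IsVectorField (U : Set V) (X : V → V) : Prop := ContDiffOn ℝ (⊤ : ℕ∞) X U

/-- Directional derivative `(a·∂X)(x) = fderiv ℝ X x (a x)`. -/
noncomputable def dirD (a X : V → V) : V → V := fun x => fderiv ℝ X x (a x)

/-- Lie bracket `[a,b] = a·∂b − b·∂a`. -/
noncomputable def bracket (a b : V → V) : V → V := fun x => dirD a b x - dirD b a x

/-- Smoothness of a connection field `Γ`. -/
def IsConnection (U : Set V) (Γ : V → V →ₗ[ℝ] V →ₗ[ℝ] V) : Prop :=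
  ∀ u v : V, ContDiffOn ℝ (⊤ : ℕ∞) (fun x => Γ x u v) U

/-- Covariant derivative associated to the connection field `Γ`. -/
noncomputable def covD (Γ : V → V →ₗ[ℝ] V →ₗ[ℝ] V) (a X : V → V) : V → V :=
  fun x => fderiv ℝ X x (a x) + Γ x (a x) (X x)

/-- Curvature of an abstract covariant-derivative operator. -/
noncomputable def curvOf (Dop : (V → V) → (V → V) → (V → V)) (a b c : V → V) : V → V :=
  fun x => Dop a (Dop b c) x - Dop b (Dop a c) x - Dop (bracket a b) c x

/-- Curvature field `ρ(a,b,c) = D_a (D_b c) − D_b (D_a c) − D_{[a,b]} c`. -/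
noncomputable def curv (Γ : V → V →ₗ[ℝ] V →ₗ[ℝ] V) : (V → V) → (V → V) → (V → V) → V → V :=
  curvOf (covD Γ)

/-- A metric on `U`: smooth, pointwise self-adjoint and invertible. -/
def IsMetric (U : Set V) (g : V → V →ₗ[ℝ] V) : Prop :=
  (∀ u : V, ContDiffOn ℝ (⊤ : ℕ∞) (fun x => g x u) U) ∧
  ∀ x ∈ U, (∀ u v : V, ⟪g x u, v⟫ = ⟪u, g x v⟫) ∧ Function.Bijective (g x)

/-- Compatibility of an abstract covariant-derivative operator with the metric `g`:
`a·∂(X ·_g Y) = (D_a X) ·_g Y + X ·_g (D_a Y)` on `U`. -/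
def CompatibleD (U : Set V) (Dop : (V → V) → (V → V) → (V → V)) (g : V → V →ₗ[ℝ] V) : Prop :=
  ∀ a X Y : V → V, IsVectorField U a → IsVectorField U X → IsVectorField U Y →
    ∀ x ∈ U, fderiv ℝ (fun y => ⟪g y (X y), Y y⟫) x (a x) =
      ⟪g x (Dop a X x), Y x⟫ + ⟪g x (X x), Dop a Y x⟫

/-- Compatibility of the connection `Γ` with the metric `g`. -/
def Compatible (U : Set V) (Γ : V → V →ₗ[ℝ] V →ₗ[ℝ] V) (g : V → V →ₗ[ℝ] V) : Prop :=
  CompatibleD U (covD Γ) g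

/-- The `h`-deformation `D'_a X = h⁻¹·(D_a (h·X))` of the covariant derivative of `Γ`,
written with an explicit pointwise inverse `hinv` of `h`. -/
noncomputable def deform (Γ : V → V →ₗ[ℝ] V →ₗ[ℝ] V) (h hinv : V → V →ₗ[ℝ] V) :
    (V → V) → (V → V) → V → V :=
  fun a X x => hinv x (covD Γ a (fun y => h y (X y)) x)

section SmoothLinearMapField

variable {𝕜 : Type*} [NontriviallyNormedField 𝕜] [CompleteSpace 𝕜]
  {E : Type*} [NormedAddCommGroup E] [NormedSpace 𝕜 E]
  {F : Type*} [NormedAddCommGroup F] [NormedSpace 𝕜 F] [FiniteDimensional 𝕜 F]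
  {G : Type*} [NormedAddCommGroup G] [NormedSpace 𝕜 G]

theorem contDiffOn_linearMap_apply {n : WithTop ℕ∞} {s : Set E} {L : E → F →ₗ[𝕜] G} {f : E → F}
    (hL : ∀ v : F, ContDiffOn 𝕜 n (fun x => L x v) s) (hf : ContDiffOn 𝕜 n f s) :
    ContDiffOn 𝕜 n (fun x => L x (f x)) s :=
  have hL' : ContDiffOn 𝕜 n (fun x => (L x).toContinuousLinearMap) s := contDiffOn_clm_apply.2 hL
  hL'.clm_apply hf

end SmoothLinearMapField

section DeformedOperator

variable {R M : Type*} [Semiring R] [AddCommMonoid M] [Module R M]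

/-- The `h`-deformation `X ↦ h⁻¹·(D_a (h·X))` of an arbitrary operator `(a, X) ↦ D_a X`, so that
`deform Γ` is `deformD (covD Γ)`. As in `deform`, `hinv` is a separate argument standing for the
pointwise inverse of `h`. -/
def deformD (Dop : (M → M) → (M → M) → M → M) (h hinv : M → M →ₗ[R] M) :
    (M → M) → (M → M) → M → M :=
  fun a X x => hinv x (Dop a (fun y => h y (X y)) x)

theorem apply_deformD (Dop : (M → M) → (M → M) → M → M) {h hinv : M → M →ₗ[R] M} {x : M}
    (hright : Function.RightInverse (hinv x) (h x)) (a X : M → M) :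
    h x (deformD Dop h hinv a X x) = Dop a (fun y => h y (X y)) x :=
  hright _

end DeformedOperator

/-- The pullback `h† ∘ g ∘ h` of a field of bilinear forms along a field `h` of linear maps, where
an endomorphism `g x` encodes the form `(u, v) ↦ ⟪g x u, v⟫`. -/
noncomputable def pullbackMetric (h g : V → V →ₗ[ℝ] V) : V → V →ₗ[ℝ] V :=
  fun x => (LinearMap.adjoint (h x)) ∘ₗ g x ∘ₗ (h x)

theorem inner_pullbackMetric_apply (h g : V → V →ₗ[ℝ] V) (x u v : V) :
    ⟪pullbackMetric h g x u, v⟫ = ⟪g x (h x u), h x v⟫ :=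
  LinearMap.adjoint_inner_left (h x) v (g x (h x u))

/- Fibrewise, `h` carries the pulled-back metric to `g` and intertwines the deformed operator with
`Dop`, so the identity at `X`, `Y` is the one for `Dop` and `g` at `h·X`, `h·Y`. -/
theorem deformed_connection_compatible_general {U : Set V}
    {Dop : (V → V) → (V → V) → V → V} {g : V → V →ₗ[ℝ] V} (hcomp : CompatibleD U Dop g)
    {h hinv : V → V →ₗ[ℝ] V} (hsmooth : ∀ u : V, ContDiffOn ℝ (⊤ : ℕ∞) (fun x => h x u) U)
    (hright : ∀ x ∈ U, Function.RightInverse (hinv x) (h x)) :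
    CompatibleD U (deformD Dop h hinv) (pullbackMetric h g) := by
  intro a X Y ha hX hY x hx
  have hhX : IsVectorField U (fun y => h y (X y)) := contDiffOn_linearMap_apply hsmooth hX
  have hhY : IsVectorField U (fun y => h y (Y y)) := contDiffOn_linearMap_apply hsmooth hY
  simp only [inner_pullbackMetric_apply, apply_deformD Dop (hright x hx)]
  exact hcomp a _ _ ha hhX hhY x hx

/-- If `D` is compatible with the constant metric `η` and `g = h† ∘ η ∘ h`, then the
`h`-deformation of `D` is compatible with `g`. -/
theorem deformed_connection_compatible
    (U : Set V) (hU : IsOpen U)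
    (Γ : V → V →ₗ[ℝ] V →ₗ[ℝ] V) (hΓ : IsConnection U Γ)
    (η : V →ₗ[ℝ] V) (hη_sa : ∀ u v : V, ⟪η u, v⟫ = ⟪u, η v⟫)
    (hη_bij : Function.Bijective η)
    (hcomp : Compatible U Γ (fun _ => η))
    (h hinv : V → V →ₗ[ℝ] V)
    (hsmooth : ∀ u : V, ContDiffOn ℝ (⊤ : ℕ∞) (fun x => h x u) U)
    (hbij : ∀ x ∈ U, Function.Bijective (h x))
    (hleft : ∀ x ∈ U, ∀ v : V, hinv x (h x v) = v)
    (hright : ∀ x ∈ U, ∀ v : V, h x (hinv x v) = v) :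
    CompatibleD U (deform Γ h hinv)
      (fun x => (LinearMap.adjoint (h x)) ∘ₗ η ∘ₗ (h x)) :=
  deformed_connection_compatible_general hcomp hsmooth hright
end

section
/- (Diffeomorphism-induced deformation preserves null curvature and torsion.) Let U, U' ⊆ V be open sets, 𝔥 : U → U' a smooth diffeomorphism (so fderiv ℝ 𝔥 x is invertible for each x ∈ U), and D a connection on U'. Define the pullback connection 𝔥*D on U by ((𝔥*D)_a X)(x) := (fderiv ℝ 𝔥 x)⁻¹ ((D_{𝔥_*a} (𝔥_*X)) (𝔥 x)), where 𝔥_* is the pushforward of vector fields, (𝔥_*a)(𝔥 x) := fderiv ℝ 𝔥 x (a x). If the curvature and the torsion of D vanish identically on U', then the curvature and the torsion of 𝔥*D vanish identically on U. -/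
/-!
Pulling back along `𝔥` is pushing forward along `𝔥⁻¹`: writing `a' = 𝔥_* a`, one has
`(𝔥*D)_a X = 𝔥⁻¹_* (D_{a'} X')`. In `(𝔥*D)_a (𝔥*D)_b X` the inner `𝔥⁻¹_*` cancels against the
outer `𝔥_*`, and `[a, b]' = [a', b']` because the second derivative of `𝔥` is symmetric. Hence
curvature and torsion are natural: those of `𝔥*D` on `a, b, c` are the images under `𝔥⁻¹_*` of
those of `D` on `a', b', c'`.
-/

open scoped RealInnerProductSpace

variable {V : Type*} [NormedAddCommGroup V] [InnerProductSpace ℝ V] [FiniteDimensional ℝ V]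

/-- Torsion `T(a,b) = D_a b − D_b a − [a,b]` of an abstract covariant-derivative operator. -/
noncomputable def torsionOf (Dop : (V → V) → (V → V) → (V → V)) (a b : V → V) : V → V :=
  fun x => Dop a b x - Dop b a x - bracket a b x

/-- Pushforward of a vector field under a diffeomorphism `𝔥` with inverse `𝔥inv`. -/
noncomputable def pushf (𝔥 𝔥inv : V → V) (a : V → V) : V → V :=
  fun y => fderiv ℝ 𝔥 (𝔥inv y) (a (𝔥inv y))

/-- The pullback connection `(𝔥*D)_a X = (fderiv 𝔥)⁻¹ ∘ (D_{𝔥_*a} (𝔥_*X)) ∘ 𝔥`, the inverse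
of `fderiv ℝ 𝔥 x` being `fderiv ℝ 𝔥inv (𝔥 x)`. -/
noncomputable def pullbackD (𝔥 𝔥inv : V → V) (Γ : V → V →ₗ[ℝ] V →ₗ[ℝ] V) :
    (V → V) → (V → V) → V → V :=
  fun a X x => fderiv ℝ 𝔥inv (𝔥 x) (covD Γ (pushf 𝔥 𝔥inv a) (pushf 𝔥 𝔥inv X) (𝔥 x))

open Filter Topology

section Calculus

open VectorField

variable {𝕜 : Type*} [NontriviallyNormedField 𝕜]
  {E : Type*} [NormedAddCommGroup E] [NormedSpace 𝕜 E]
  {F : Type*} [NormedAddCommGroup F] [NormedSpace 𝕜 F]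
  {f : E → F} {x : E}

theorem fderiv_apply_fderiv_of_eventually_leftInverse {g : F → E}
    (hg : DifferentiableAt 𝕜 g (f x)) (hf : DifferentiableAt 𝕜 f x)
    (hgf : ∀ᶠ z in 𝓝 x, g (f z) = z) (v : E) :
    fderiv 𝕜 g (f x) (fderiv 𝕜 f x v) = v := by
  have hid : g ∘ f =ᶠ[𝓝 x] id := hgf
  rw [← ContinuousLinearMap.comp_apply, ← fderiv_comp x hg hf, hid.fderiv_eq, fderiv_id,
    ContinuousLinearMap.id_apply]

theorem lieBracket_eq_fderiv_apply_of_related {n : WithTop ℕ∞} {a b : E → E} {a' b' : F → F}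
    (hf : ContDiffAt 𝕜 n f x) (hn : minSmoothness 𝕜 2 ≤ n)
    (ha : DifferentiableAt 𝕜 a x) (hb : DifferentiableAt 𝕜 b x)
    (ha' : DifferentiableAt 𝕜 a' (f x)) (hb' : DifferentiableAt 𝕜 b' (f x))
    (haa' : a' ∘ f =ᶠ[𝓝 x] fun z => fderiv 𝕜 f z (a z))
    (hbb' : b' ∘ f =ᶠ[𝓝 x] fun z => fderiv 𝕜 f z (b z)) :
    lieBracket 𝕜 a' b' (f x) = fderiv 𝕜 f x (lieBracket 𝕜 a b x) := by
  have hfx : DifferentiableAt 𝕜 f x :=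
    hf.differentiableAt (two_pos.trans_le (le_minSmoothness.trans hn)).ne'
  have haa'x : a' (f x) = fderiv 𝕜 f x (a x) := haa'.eq_of_nhds
  have hbb'x : b' (f x) = fderiv 𝕜 f x (b x) := hbb'.eq_of_nhds
  calc lieBracket 𝕜 a' b' (f x)
      = fderiv 𝕜 (b' ∘ f) x (a x) - fderiv 𝕜 (a' ∘ f) x (b x) := by
        rw [lieBracket, haa'x, hbb'x, fderiv_comp x hb' hfx, fderiv_comp x ha' hfx,
          ContinuousLinearMap.comp_apply, ContinuousLinearMap.comp_apply]
    _ = fderiv 𝕜 (fun z => fderiv 𝕜 f z (b z)) x (a x) -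
          fderiv 𝕜 (fun z => fderiv 𝕜 f z (a z)) x (b x) := by
        rw [haa'.fderiv_eq, hbb'.fderiv_eq]
    _ = fderiv 𝕜 f x (lieBracket 𝕜 a b x) := (fderiv_apply_lieBracket hf hn hb ha).symm

end Calculus

/-- Smooth diffeomorphisms between open sets `U` and `U'`, given as a pair of mutually inverse
maps. Both maps are total, as in `pushf` and `pullbackD`; their values off `U` and `U'` are
unconstrained. -/
structure IsDiffeoOn {E F : Type*} [NormedAddCommGroup E] [NormedSpace ℝ E]
    [NormedAddCommGroup F] [NormedSpace ℝ F] (U : Set E) (U' : Set F) (h : E → F) (k : F → E) :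
    Prop where
  isOpen_source : IsOpen U
  isOpen_target : IsOpen U'
  contDiffOn : ContDiffOn ℝ (⊤ : ℕ∞) h U
  contDiffOn_symm : ContDiffOn ℝ (⊤ : ℕ∞) k U'
  mapsTo : Set.MapsTo h U U'
  mapsTo_symm : Set.MapsTo k U' U
  left_inv : ∀ x ∈ U, k (h x) = x
  right_inv : ∀ y ∈ U', h (k y) = y

namespace IsDiffeoOn

variable {E F : Type*} [NormedAddCommGroup E] [NormedSpace ℝ E] [NormedAddCommGroup F]
  [NormedSpace ℝ F] {U : Set E} {U' : Set F} {h : E → F} {k : F → E} {x : E}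

theorem symm (H : IsDiffeoOn U U' h k) : IsDiffeoOn U' U k h :=
  ⟨H.isOpen_target, H.isOpen_source, H.contDiffOn_symm, H.contDiffOn, H.mapsTo_symm, H.mapsTo,
    H.right_inv, H.left_inv⟩

theorem contDiffAt (H : IsDiffeoOn U U' h k) (hx : x ∈ U) : ContDiffAt ℝ (⊤ : ℕ∞) h x :=
  H.contDiffOn.contDiffAt (H.isOpen_source.mem_nhds hx)

theorem differentiableAt (H : IsDiffeoOn U U' h k) (hx : x ∈ U) : DifferentiableAt ℝ h x :=
  (H.contDiffAt hx).differentiableAt (by simp)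

theorem fderiv_symm_apply_fderiv (H : IsDiffeoOn U U' h k) (hx : x ∈ U) (v : E) :
    fderiv ℝ k (h x) (fderiv ℝ h x v) = v :=
  fderiv_apply_fderiv_of_eventually_leftInverse (H.symm.differentiableAt (H.mapsTo hx))
    (H.differentiableAt hx) (eventually_of_mem (H.isOpen_source.mem_nhds hx) H.left_inv) v

end IsDiffeoOn

section Naturality

variable {E : Type*} [NormedAddCommGroup E] [InnerProductSpace ℝ E] {U U' : Set E} {h k : E → E}
  {a b : E → E} {x : E}

theorem IsVectorField.differentiableAt (ha : IsVectorField U a) (hU : IsOpen U) (hx : x ∈ U) :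
    DifferentiableAt ℝ a x :=
  (ContDiffOn.contDiffAt ha (hU.mem_nhds hx)).differentiableAt (by simp)

theorem covD_congr {Γ : E → E →ₗ[ℝ] E →ₗ[ℝ] E} {a a' X X' : E → E} {y : E}
    (ha : a y = a' y) (hX : X =ᶠ[𝓝 y] X') : covD Γ a X y = covD Γ a' X' y := by
  rw [covD, covD, ha, hX.fderiv_eq, hX.eq_of_nhds]

namespace IsDiffeoOn

theorem pushf_apply (H : IsDiffeoOn U U' h k) (a : E → E) (hx : x ∈ U) :
    pushf h k a (h x) = fderiv ℝ h x (a x) := by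
  rw [pushf, H.left_inv x hx]

theorem isVectorField_pushf (H : IsDiffeoOn U U' h k) (ha : IsVectorField U a) :
    IsVectorField U' (pushf h k a) :=
  have hdh : ContDiffOn ℝ (⊤ : ℕ∞) (fderiv ℝ h) U :=
    H.contDiffOn.fderiv_of_isOpen H.isOpen_source (by simp)
  (hdh.comp H.contDiffOn_symm H.mapsTo_symm).clm_apply
    (ContDiffOn.comp ha H.contDiffOn_symm H.mapsTo_symm)

theorem bracket_pushf (H : IsDiffeoOn U U' h k) (ha : IsVectorField U a) (hb : IsVectorField U b)
    (hx : x ∈ U) :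
    bracket (pushf h k a) (pushf h k b) (h x) = fderiv ℝ h x (bracket a b x) := by
  have differentiableAt_pushf : ∀ {X : E → E}, IsVectorField U X →
      DifferentiableAt ℝ (pushf h k X) (h x) := fun hX =>
    (H.isVectorField_pushf hX).differentiableAt H.isOpen_target (H.mapsTo hx)
  have related_pushf : ∀ X : E → E, pushf h k X ∘ h =ᶠ[𝓝 x] fun z => fderiv ℝ h z (X z) :=
    fun X => eventually_of_mem (H.isOpen_source.mem_nhds hx) fun _ => H.pushf_apply X
  exact lieBracket_eq_fderiv_apply_of_related (H.contDiffAt hx)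
    (by simpa using ENat.LEInfty.out)
    (ha.differentiableAt H.isOpen_source hx) (hb.differentiableAt H.isOpen_source hx)
    (differentiableAt_pushf ha) (differentiableAt_pushf hb) (related_pushf a) (related_pushf b)

theorem pushf_pushf_symm (H : IsDiffeoOn U U' h k) (Z : E → E) :
    Set.EqOn (pushf h k (pushf k h Z)) Z U' := by
  intro y hy
  rw [pushf, H.symm.pushf_apply Z hy, H.symm.fderiv_symm_apply_fderiv hy]

variable (Γ : E → E →ₗ[ℝ] E →ₗ[ℝ] E)

theorem pushf_pullbackD (H : IsDiffeoOn U U' h k) (a X : E → E) :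
    Set.EqOn (pushf h k (pullbackD h k Γ a X)) (covD Γ (pushf h k a) (pushf h k X)) U' :=
  H.pushf_pushf_symm _

theorem pullbackD_pullbackD (H : IsDiffeoOn U U' h k) (a b X : E → E) (hx : x ∈ U) :
    pullbackD h k Γ a (pullbackD h k Γ b X) x =
      fderiv ℝ k (h x)
        (covD Γ (pushf h k a) (covD Γ (pushf h k b) (pushf h k X)) (h x)) :=
  congrArg _ <| covD_congr rfl <|
    (H.pushf_pullbackD Γ b X).eventuallyEq_of_mem (H.isOpen_target.mem_nhds (H.mapsTo hx))

theorem curvOf_pullbackD (H : IsDiffeoOn U U' h k) (ha : IsVectorField U a)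
    (hb : IsVectorField U b) (c : E → E) (hx : x ∈ U) :
    curvOf (pullbackD h k Γ) a b c x =
      fderiv ℝ k (h x) (curv Γ (pushf h k a) (pushf h k b) (pushf h k c) (h x)) := by
  have pullbackD_bracket : pullbackD h k Γ (bracket a b) c x = fderiv ℝ k (h x)
      (covD Γ (bracket (pushf h k a) (pushf h k b)) (pushf h k c) (h x)) :=
    congrArg _ <| covD_congr
      ((H.pushf_apply _ hx).trans (H.bracket_pushf ha hb hx).symm) .rfl
  rw [curvOf, H.pullbackD_pullbackD Γ a b c hx, H.pullbackD_pullbackD Γ b a c hx,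
    pullbackD_bracket, curv, curvOf, map_sub, map_sub]

theorem torsionOf_pullbackD (H : IsDiffeoOn U U' h k) (ha : IsVectorField U a)
    (hb : IsVectorField U b) (hx : x ∈ U) :
    torsionOf (pullbackD h k Γ) a b x =
      fderiv ℝ k (h x) (torsionOf (covD Γ) (pushf h k a) (pushf h k b) (h x)) := by
  rw [torsionOf, torsionOf, map_sub, map_sub, H.bracket_pushf ha hb hx,
    H.fderiv_symm_apply_fderiv hx, pullbackD, pullbackD]

end IsDiffeoOn

theorem pullback_connection_flat_and_torsion_free_general (H : IsDiffeoOn U U' h k)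
    (Γ : E → E →ₗ[ℝ] E →ₗ[ℝ] E)
    (hflat : ∀ a b c : E → E, IsVectorField U' a → IsVectorField U' b → IsVectorField U' c →
      ∀ y ∈ U', curv Γ a b c y = 0)
    (htorfree : ∀ a b : E → E, IsVectorField U' a → IsVectorField U' b →
      ∀ y ∈ U', torsionOf (covD Γ) a b y = 0) :
    (∀ a b c : E → E, IsVectorField U a → IsVectorField U b → IsVectorField U c →
      ∀ x ∈ U, curvOf (pullbackD h k Γ) a b c x = 0) ∧
    (∀ a b : E → E, IsVectorField U a → IsVectorField U b →
      ∀ x ∈ U, torsionOf (pullbackD h k Γ) a b x = 0) := by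
  constructor
  · intro a b c ha hb hc x hx
    rw [H.curvOf_pullbackD Γ ha hb c hx, hflat _ _ _ (H.isVectorField_pushf ha)
      (H.isVectorField_pushf hb) (H.isVectorField_pushf hc) _ (H.mapsTo hx), map_zero]
  · intro a b ha hb x hx
    rw [H.torsionOf_pullbackD Γ ha hb hx, htorfree _ _ (H.isVectorField_pushf ha)
      (H.isVectorField_pushf hb) _ (H.mapsTo hx), map_zero]

end Naturality

/-- A diffeomorphism-induced deformation preserves null curvature and null torsion. -/
theorem pullback_connection_flat_and_torsion_free
    (U U' : Set V) (hU : IsOpen U) (hU' : IsOpen U')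
    (𝔥 𝔥inv : V → V)
    (h𝔥 : ContDiffOn ℝ (⊤ : ℕ∞) 𝔥 U) (h𝔥inv : ContDiffOn ℝ (⊤ : ℕ∞) 𝔥inv U')
    (hmaps : Set.MapsTo 𝔥 U U') (hmaps' : Set.MapsTo 𝔥inv U' U)
    (hleft : ∀ x ∈ U, 𝔥inv (𝔥 x) = x) (hright : ∀ y ∈ U', 𝔥 (𝔥inv y) = y)
    (hdbij : ∀ x ∈ U, Function.Bijective (fderiv ℝ 𝔥 x))
    (hdinv : ∀ x ∈ U, ∀ v : V, fderiv ℝ 𝔥inv (𝔥 x) (fderiv ℝ 𝔥 x v) = v ∧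
      fderiv ℝ 𝔥 x (fderiv ℝ 𝔥inv (𝔥 x) v) = v)
    (Γ : V → V →ₗ[ℝ] V →ₗ[ℝ] V) (hΓ : IsConnection U' Γ)
    (hflat : ∀ a b c : V → V, IsVectorField U' a → IsVectorField U' b → IsVectorField U' c →
      ∀ y ∈ U', curv Γ a b c y = 0)
    (htorfree : ∀ a b : V → V, IsVectorField U' a → IsVectorField U' b →
      ∀ y ∈ U', torsionOf (covD Γ) a b y = 0) :
    (∀ a b c : V → V, IsVectorField U a → IsVectorField U b → IsVectorField U c →
      ∀ x ∈ U, curvOf (pullbackD 𝔥 𝔥inv Γ) a b c x = 0) ∧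
    (∀ a b : V → V, IsVectorField U a → IsVectorField U b →
      ∀ x ∈ U, torsionOf (pullbackD 𝔥 𝔥inv Γ) a b x = 0) :=
  pullback_connection_flat_and_torsion_free_general
    ⟨hU, hU', h𝔥, h𝔥inv, hmaps, hmaps', hleft, hright⟩ Γ hflat htorfree
end
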